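/- Let i ≥ 1. Let H and H' be complex Hilbert spaces, let (s_n)_{n ≥ 1} and (s'_n)_{n ≥ 1} be families of bounded operators on H and H' respectively with s_m^* s_n = δ_{mn}·1 and s'_m{}^* s'_n = δ_{mn}·1 for all m, n ≥ 1, and let Ω ∈ H and Ω' ∈ H' be unit vectors, cyclic for (s_n) and (s'_n) respectively, with s_1(s_2 Ω) = Ω and s'_i Ω' = Ω'. Then there is no unitary operator U : H → H' with U s_n = s'_n U for every n ≥ 1. (The class P∞(12) is not unitarily equivalent to any class P∞(i).) -/

import Mathlib

/-!
Let `s` be a Cuntz family on `H` with a cyclic vector `Ω` fixed by `s i`, and let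
`p = s_J p` for a word `J` containing a letter other than `i`. The relations `s_m† s_n = δ_{mn}` and
`s_i† Ω = Ω` show that the closed span of the vectors `s_K Ω` is invariant under the adjoints, so it
is all of `H`. On the other hand the vectors `s_K p`, for `K` a suffix of `J`, span a subspace which
is invariant under the adjoints, since `s_n†` strips the first letter of a word and `p = s_J p`, and
which is orthogonal to `Ω`, by comparing words letter by letter with `Ω = s_i ⋯ s_i Ω`. Its
orthogonal complement is therefore closed, invariant under `s`, and contains `Ω`; hence it is `H`,
and `p = 0`. A unitary equivalence would turn a unit vector fixed by `s_1 s_2` into such a `p`.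
-/

section

open ContinuousLinearMap

open scoped InnerProductSpace

variable {𝕜 ι H : Type*} [RCLike 𝕜] [NormedAddCommGroup H] [InnerProductSpace 𝕜 H]

section ForwardSpan

variable {s : ι → H →L[𝕜] H} {Ω : H}

/-- The smallest closed subspace containing `Ω` and invariant under every `s n`, but not
necessarily under the adjoints. -/
def forwardSpan (s : ι → H →L[𝕜] H) (Ω : H) : ClosedSubmodule 𝕜 H :=
  sInf {K | Ω ∈ K ∧ ∀ n, K ≤ K.comap (s n)}

theorem mem_forwardSpan_self : Ω ∈ forwardSpan s Ω :=
  ClosedSubmodule.mem_sInf.2 fun _ hK ↦ hK.1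

theorem forwardSpan_le {K : ClosedSubmodule 𝕜 H} (hΩ : Ω ∈ K) (hK : ∀ n, K ≤ K.comap (s n)) :
    forwardSpan s Ω ≤ K :=
  sInf_le ⟨hΩ, hK⟩

theorem forwardSpan_le_comap (n : ι) : forwardSpan s Ω ≤ (forwardSpan s Ω).comap (s n) :=
  fun _ hv ↦ ClosedSubmodule.mem_sInf.2 fun _ hK ↦ hK.2 n (ClosedSubmodule.mem_sInf.1 hv _ hK)

theorem forwardSpan_le_orthogonal [CompleteSpace H] {M : Submodule 𝕜 H}
    (hM : ∀ n, M ≤ M.comap (adjoint (s n)).toLinearMap) (hΩ : Ω ∈ Mᗮ) :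
    (forwardSpan s Ω).toSubmodule ≤ Mᗮ :=
  forwardSpan_le (K := ⟨Mᗮ, M.isClosed_orthogonal⟩) hΩ fun n ↦
    orthogonal_mem_invtSubmodule (hM n)

end ForwardSpan

/-- The span of the vectors `s_K p` for `K` a suffix of the word `J`, where a word acts by
`K.foldr (fun n ↦ s n)`, so that `s_{ab} = s_a s_b`. It is the adjoint-invariant subspace generated
by a vector with `s_J p = p` when `s` is a Cuntz family and `J` is nonempty. -/
def suffixSpan (s : ι → H →L[𝕜] H) (J : List ι) (p : H) : Submodule 𝕜 H :=
  Submodule.span 𝕜 {v | ∃ K, K <:+ J ∧ K.foldr (fun n ↦ s n) p = v}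

variable [CompleteSpace H]

/-- `Ω` is cyclic for `s`: no proper closed subspace containing `Ω` is invariant under every `s n`
and every adjoint `(s n)†`. -/
def IsCyclicVector (s : ι → H →L[𝕜] H) (Ω : H) : Prop :=
  ∀ K : ClosedSubmodule 𝕜 H, Ω ∈ K → (∀ n, K ≤ K.comap (s n)) →
    (∀ n, K ≤ K.comap (adjoint (s n))) → K = ⊤

variable [DecidableEq ι]

/-- The Cuntz relations `s_m† s_n = δ_{mn}`: isometries with pairwise orthogonal ranges, indexed by
an arbitrary type. -/
def IsCuntzFamily (s : ι → H →L[𝕜] H) : Prop :=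
  ∀ m n, adjoint (s m) ∘L s n = if m = n then 1 else 0

namespace IsCuntzFamily

variable {s : ι → H →L[𝕜] H} {i : ι} {Ω p : H} {J : List ι}

theorem adjoint_apply_apply (hs : IsCuntzFamily s) (m n : ι) (v : H) :
    adjoint (s m) (s n v) = if m = n then v else 0 := by
  rw [← comp_apply, hs m n]
  split_ifs <;> rfl

theorem inner_apply_apply (hs : IsCuntzFamily s) (m n : ι) (v w : H) :
    ⟪s m v, s n w⟫_𝕜 = if m = n then ⟪v, w⟫_𝕜 else 0 := by
  rw [← adjoint_inner_right, hs.adjoint_apply_apply]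
  split_ifs
  · rfl
  · exact inner_zero_right v

theorem forwardSpan_eq_top (hs : IsCuntzFamily s) (hcyc : IsCyclicVector s Ω)
    (hΩ : ∀ n, adjoint (s n) Ω ∈ forwardSpan s Ω) : forwardSpan s Ω = ⊤ := by
  refine hcyc _ mem_forwardSpan_self forwardSpan_le_comap fun n ↦ ?_
  -- Minimality of the span against the forward-invariant `K` yields adjoint-invariance.
  let K := forwardSpan s Ω ⊓ (forwardSpan s Ω).comap (adjoint (s n))
  have hK : ∀ m, K ≤ K.comap (s m) := by
    intro m v hv
    refine ClosedSubmodule.mem_inf.2 ⟨forwardSpan_le_comap m hv.1, ?_⟩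
    change adjoint (s n) (s m v) ∈ forwardSpan s Ω
    rw [hs.adjoint_apply_apply]
    split_ifs
    · exact hv.1
    · exact zero_mem _
  exact (forwardSpan_le (K := K) ⟨mem_forwardSpan_self, hΩ n⟩ hK).trans inf_le_right

theorem forwardSpan_eq_top_of_apply_eq_self (hs : IsCuntzFamily s) (hcyc : IsCyclicVector s Ω)
    (hfix : s i Ω = Ω) : forwardSpan s Ω = ⊤ := by
  refine hs.forwardSpan_eq_top hcyc fun n ↦ ?_
  have hadj : adjoint (s n) Ω = if n = i then Ω else 0 := by
    simpa only [hfix] using hs.adjoint_apply_apply n i Ω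
  rw [hadj]
  split_ifs
  · exact mem_forwardSpan_self
  · exact zero_mem _

theorem inner_foldr_of_apply_eq_self (hs : IsCuntzFamily s) (hfix : s i Ω = Ω) (K : List ι)
    (v : H) : ⟪Ω, K.foldr (fun n ↦ s n) v⟫_𝕜 = if ∀ a ∈ K, a = i then ⟪Ω, v⟫_𝕜 else 0 := by
  induction K with
  | nil => simp
  | cons a K ih =>
    have hstep := hs.inner_apply_apply i a Ω (K.foldr (fun n ↦ s n) v)
    rw [hfix, ih] at hstep
    simp only [List.foldr_cons, hstep, List.forall_mem_cons, ite_and, eq_comm]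

theorem inner_foldr_eq_zero_of_foldr_eq_self (hs : IsCuntzFamily s) (hfix : s i Ω = Ω)
    (hJ : ∃ a ∈ J, a ≠ i) (hp : J.foldr (fun n ↦ s n) p = p) (K : List ι) :
    ⟪Ω, K.foldr (fun n ↦ s n) p⟫_𝕜 = 0 := by
  have hΩp : ⟪Ω, p⟫_𝕜 = 0 := by
    rw [← hp, hs.inner_foldr_of_apply_eq_self hfix, if_neg (by push Not; exact hJ)]
  rw [hs.inner_foldr_of_apply_eq_self hfix, hΩp, ite_self]

theorem suffixSpan_le_comap_adjoint (hs : IsCuntzFamily s) (hJ : J ≠ [])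
    (hp : J.foldr (fun n ↦ s n) p = p) (n : ι) :
    suffixSpan s J p ≤ (suffixSpan s J p).comap (adjoint (s n)).toLinearMap := by
  have hcons : ∀ a K, a :: K <:+ J →
      adjoint (s n) ((a :: K).foldr (fun n ↦ s n) p) ∈ suffixSpan s J p := by
    intro a K hK
    rw [List.foldr_cons, hs.adjoint_apply_apply]
    split_ifs
    · exact Submodule.subset_span ⟨K, (List.suffix_cons a K).trans hK, rfl⟩
    · exact zero_mem _
  refine Submodule.span_le.2 ?_
  rintro _ ⟨_ | ⟨a, K⟩, hK, rfl⟩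
  · obtain ⟨b, L, rfl⟩ := List.exists_cons_of_ne_nil hJ
    have hpL := hcons b L List.suffix_rfl
    rwa [hp] at hpL
  · exact hcons a K hK

theorem mem_orthogonal_suffixSpan (hs : IsCuntzFamily s) (hfix : s i Ω = Ω)
    (hJ : ∃ a ∈ J, a ≠ i) (hp : J.foldr (fun n ↦ s n) p = p) : Ω ∈ (suffixSpan s J p)ᗮ := by
  have hle : suffixSpan s J p ≤ (𝕜 ∙ Ω)ᗮ := by
    refine Submodule.span_le.2 ?_
    rintro _ ⟨K, -, rfl⟩
    exact Submodule.mem_orthogonal_singleton_iff_inner_right.2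
      (hs.inner_foldr_eq_zero_of_foldr_eq_self hfix hJ hp K)
  exact (Submodule.mem_orthogonal' _ _).2 fun _ hv ↦
    Submodule.mem_orthogonal_singleton_iff_inner_right.1 (hle hv)

theorem eq_zero_of_foldr_eq_self (hs : IsCuntzFamily s) (hcyc : IsCyclicVector s Ω)
    (hfix : s i Ω = Ω) (hJ : ∃ a ∈ J, a ≠ i) (hp : J.foldr (fun n ↦ s n) p = p) : p = 0 := by
  have hJne : J ≠ [] := List.ne_nil_of_mem hJ.choose_spec.1
  have hle : (forwardSpan s Ω).toSubmodule ≤ (suffixSpan s J p)ᗮ :=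
    forwardSpan_le_orthogonal (hs.suffixSpan_le_comap_adjoint hJne hp)
      (hs.mem_orthogonal_suffixSpan hfix hJ hp)
  have hp_orth : p ∈ (suffixSpan s J p)ᗮ :=
    hle (hs.forwardSpan_eq_top_of_apply_eq_self hcyc hfix ▸ ClosedSubmodule.mem_top)
  have hp_mem : p ∈ suffixSpan s J p := Submodule.subset_span ⟨[], List.nil_suffix, rfl⟩
  exact inner_self_eq_zero.1 (Submodule.inner_right_of_mem_orthogonal hp_mem hp_orth)

end IsCuntzFamily

theorem P_infty_12_not_equivalent_P_infty_i_general {E : Type*} {t : ι → E → E}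
    {s : ι → H →L[𝕜] H} (hs : IsCuntzFamily s) {i : ι} {Ω : H} (hcyc : IsCyclicVector s Ω)
    (hfix : s i Ω = Ω) {U : E → H} (hU : ∀ n, Function.Semiconj U (t n) (s n))
    {J : List ι} (hJ : ∃ a ∈ J, a ≠ i) {x : E} (hx : J.foldr t x = x) : U x = 0 := by
  refine hs.eq_zero_of_foldr_eq_self hcyc hfix hJ ?_
  rw [List.foldr_hom U fun n y ↦ (hU n y).symm, hx]

end

theorem P_infty_12_not_equivalent_P_infty_i
    {H : Type*} [NormedAddCommGroup H] [InnerProductSpace ℂ H] [CompleteSpace H]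
    {H' : Type*} [NormedAddCommGroup H'] [InnerProductSpace ℂ H'] [CompleteSpace H']
    (i : ℕ) (hi : 1 ≤ i)
    (s : ℕ → H →L[ℂ] H) (s' : ℕ → H' →L[ℂ] H')
    (hCuntz : ∀ m n, 1 ≤ m → 1 ≤ n →
      (ContinuousLinearMap.adjoint (s m)).comp (s n) =
        if m = n then (1 : H →L[ℂ] H) else 0)
    (hCuntz' : ∀ m n, 1 ≤ m → 1 ≤ n →
      (ContinuousLinearMap.adjoint (s' m)).comp (s' n) =
        if m = n then (1 : H' →L[ℂ] H') else 0)
    (Ω : H) (hΩnorm : ‖Ω‖ = 1)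
    (Ω' : H') (hΩ'norm : ‖Ω'‖ = 1)
    (hcyc : ∀ K : Submodule ℂ H, IsClosed (K : Set H) → Ω ∈ K →
      (∀ n, 1 ≤ n → ∀ v ∈ K, s n v ∈ K) →
      (∀ n, 1 ≤ n → ∀ v ∈ K, ContinuousLinearMap.adjoint (s n) v ∈ K) → K = ⊤)
    (hcyc' : ∀ K : Submodule ℂ H', IsClosed (K : Set H') → Ω' ∈ K →
      (∀ n, 1 ≤ n → ∀ v ∈ K, s' n v ∈ K) →
      (∀ n, 1 ≤ n → ∀ v ∈ K, ContinuousLinearMap.adjoint (s' n) v ∈ K) → K = ⊤)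
    (hfix : s 1 (s 2 Ω) = Ω) (hfix' : s' i Ω' = Ω') :
    ¬ ∃ U : H ≃ₗᵢ[ℂ] H', ∀ n, 1 ≤ n → ∀ v : H, U (s n v) = s' n (U v) := by
  rintro ⟨U, hU⟩
  have hs' : IsCuntzFamily fun n : ℕ+ ↦ s' n := fun m n ↦ by
    simpa only [PNat.coe_inj] using hCuntz' m n m.pos n.pos
  have hcycPNat : IsCyclicVector (fun n : ℕ+ ↦ s' n) Ω' := fun K hΩ hK hK' ↦
    ClosedSubmodule.toSubmodule_injective <| hcyc' K.toSubmodule K.isClosed hΩ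
      (fun n hn _ hv ↦ hK ⟨n, hn⟩ hv) fun n hn _ hv ↦ hK' ⟨n, hn⟩ hv
  have hJ : ∃ a ∈ ([1, 2] : List ℕ+), a ≠ ⟨i, hi⟩ := by
    by_contra! h
    exact absurd ((h 1 (by simp)).trans (h 2 (by simp)).symm) (by decide)
  have hUΩ : U Ω = 0 := P_infty_12_not_equivalent_P_infty_i_general
    (t := fun n : ℕ+ ↦ s n) (i := ⟨i, hi⟩) hs' hcycPNat hfix' (fun n ↦ hU n n.pos) hJ hfix
  rw [← U.norm_map, hUΩ, norm_zero] at hΩnorm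
  exact zero_ne_one hΩnorm
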